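/- Under the prox-average message passing iteration, if each device objective f_d is convex, lower semicontinuous, and proper, and there exists a saddle point (an optimal primal p⋆ with p̄⋆ = 0 and finite f(p⋆) = f⋆, together with y⋆ : 𝒯 → ℝ^T constant on each net such that p⋆ minimizes q ↦ f(q) + ∑_{t∈𝒯} ⟨y⋆_t, q̄_t⟩ over all q), then the objective values converge to the optimal value of the OPSP: ∑_{d∈𝒟} f_d(p^k_d) → f⋆ as k → ∞. -/

import Mathlib

/-!
Write `z^k = p^k - p̄^k`. Averaging over nets is the orthogonal projection onto the schedules that
are constant on nets, and `u^k` and `p̄^k` lie in its range, so `z^k` and `p⋆` are orthogonal to them.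
The first-order optimality condition of the proximal step (`prox_opt`), summed over the devices and
tested at `p⋆`, therefore reads
`f(p^{k+1}) - f⋆ ≤ ρ (⟪z^{k+1} - z^k, p⋆ - z^{k+1}⟫ - ⟪u^{k+1}, u^{k+1} - u^k⟫)`,
while the saddle point gives `0 ≤ f(p^{k+1}) - f⋆ + ⟪y⋆, u^{k+1} - u^k⟫`.

Adding the two shows that `V^k = ‖z^k - p⋆‖² + ‖u^k - y⋆/ρ‖²` decreases by at least
`‖z^{k+1} - z^k‖² + ‖u^{k+1} - u^k‖²` at every step. Hence `z^k` and `u^k` are bounded and their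
increments tend to `0`, so both bounds on `f(p^{k+1}) - f⋆` tend to `0`
(`tendsto_of_two_sided_bound`).
-/

open Finset RealInnerProductSpace

/-- Average net power imbalance: `p̄ t = (1/|n|) ∑_{t'∈n} p t'`, where `n` is the net of `t`
(nets are the fibers of `net : 𝒯 → N`). -/
noncomputable def netAvg {𝒯 N : Type*} [Fintype 𝒯] [DecidableEq N] {T : ℕ}
    (net : 𝒯 → N) (p : 𝒯 → EuclideanSpace ℝ (Fin T)) (t : 𝒯) : EuclideanSpace ℝ (Fin T) :=
  (((univ.filter fun t' => net t' = net t).card : ℝ)⁻¹) •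
    ∑ t' ∈ univ.filter fun t' => net t' = net t, p t'

/-- The network objective `f(p) = ∑_{d ∈ 𝒟} f_d(p_d)`, where `p_d` is the restriction of
`p` to the terminals of device `d` (devices are the fibers of `dev : 𝒯 → D`). -/
noncomputable def netObj {𝒯 D : Type*} [Fintype 𝒯] [Fintype D] [DecidableEq D] {T : ℕ}
    (dev : 𝒯 → D)
    (f : ∀ d : D, ({t : 𝒯 // dev t = d} → EuclideanSpace ℝ (Fin T)) → EReal)
    (p : 𝒯 → EuclideanSpace ℝ (Fin T)) : EReal :=
  ∑ d : D, f d fun t => p t.1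

/-- First-order optimality for the proximal step: if `x` minimizes `g + (ρ/2)‖w - ·‖²` with `g`
convex, then `ρ (w - x)` is a subgradient of `g` at `x`. -/
lemma prox_opt {ι V : Type*} [Fintype ι] [NormedAddCommGroup V] [InnerProductSpace ℝ V]
    (g : (ι → V) → EReal)
    (hconv : ∀ x y : ι → V, ∀ a b : ℝ, 0 ≤ a → 0 ≤ b → a + b = 1 →
      g (a • x + b • y) ≤ (a : EReal) * g x + (b : EReal) * g y)
    (ρ : ℝ) (w x q : ι → V) (A B : ℝ) (hA : g x = A) (hB : g q = B)
    (hmin : ∀ y : ι → V, g x + ((ρ / 2 * ∑ t, ‖w t - x t‖ ^ 2 : ℝ) : EReal) ≤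
      g y + ((ρ / 2 * ∑ t, ‖w t - y t‖ ^ 2 : ℝ) : EReal)) :
    A - B ≤ ρ * ∑ t, ⟪x t - w t, q t - x t⟫ := by
  set S : ℝ := ∑ t, ⟪x t - w t, q t - x t⟫ with hS
  set Q : ℝ := ∑ t, ‖q t - x t‖ ^ 2 with hQ
  -- Compare `x` with the point `(1 - s) x + s q`; the bound below then follows as `s → 0⁺`.
  have key : ∀ s : ℝ, 0 < s → s < 1 → A - B ≤ ρ * S + s * (ρ / 2 * Q) := by
    intro s hs0 hs1
    have h1 := hmin ((1 - s) • x + s • q)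
    have h2 := hconv x q (1 - s) s (by linarith) hs0.le (by ring)
    have h3 := h1.trans (add_le_add_left h2 _)
    rw [hA, hB] at h3
    norm_cast at h3
    have h4 : ∑ t, ‖w t - ((1 - s) • x + s • q) t‖ ^ 2
        = ∑ t, ‖w t - x t‖ ^ 2 + 2 * s * S + s ^ 2 * Q := by
      rw [hS, hQ, mul_sum, mul_sum, ← sum_add_distrib, ← sum_add_distrib]
      refine sum_congr rfl fun t _ => ?_
      have e : w t - ((1 - s) • x + s • q) t = -((x t - w t) + s • (q t - x t)) := by
        simp only [Pi.add_apply, Pi.smul_apply]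
        module
      rw [e, norm_neg, norm_add_sq_real, real_inner_smul_right, norm_smul, mul_pow,
        Real.norm_eq_abs, sq_abs, norm_sub_rev (x t)]
      ring
    rw [h4] at h3
    have h5 : s * (A - B) ≤ s * (ρ * S + s * (ρ / 2 * Q)) := by
      linear_combination h3
    exact le_of_mul_le_mul_left h5 hs0
  have hlim : Filter.Tendsto (fun s : ℝ => ρ * S + s * (ρ / 2 * Q)) (nhdsWithin 0 (Set.Ioi 0))
      (nhds (ρ * S)) := by
    have : Filter.Tendsto (fun s : ℝ => ρ * S + s * (ρ / 2 * Q)) (nhds 0)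
        (nhds (ρ * S + 0 * (ρ / 2 * Q))) := by
      apply Continuous.tendsto
      fun_prop
    rw [zero_mul, add_zero] at this
    exact this.mono_left nhdsWithin_le_nhds
  refine ge_of_tendsto hlim ?_
  filter_upwards [Ioo_mem_nhdsGT (zero_lt_one' ℝ)] with s hs
  exact key s hs.1 hs.2

/-- The Lyapunov argument: the two-sided bound on `F k - Fs` forces `F → Fs`. -/
lemma tendsto_of_two_sided_bound {E : Type*} [NormedAddCommGroup E] [InnerProductSpace ℝ E]
    (z u : ℕ → E) (s y : E) (ρ : ℝ) (hρ : 0 < ρ) (F : ℕ → ℝ) (Fs : ℝ)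
    (hup : ∀ k, F k - Fs ≤
      ρ * (⟪z (k + 1) - z k, s - z (k + 1)⟫ - ⟪u (k + 1), u (k + 1) - u k⟫))
    (hlow : ∀ k, 0 ≤ F k - Fs + ⟪y, u (k + 1) - u k⟫) :
    Filter.Tendsto F Filter.atTop (nhds Fs) := by
  set v : E := ρ⁻¹ • y with hv
  set W : ℕ → ℝ := fun k => ‖z k - s‖ ^ 2 + ‖u k - v‖ ^ 2 with hW
  have hdec : ∀ k, W (k + 1) + (‖z (k + 1) - z k‖ ^ 2 + ‖u (k + 1) - u k‖ ^ 2) ≤ W k := by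
    intro k
    have h1 := hup k
    have h2 := hlow k
    have hy : y = ρ • v := by rw [hv, smul_smul, mul_inv_cancel₀ hρ.ne', one_smul]
    rw [hy, real_inner_smul_left] at h2
    have h3 : 0 ≤ ρ * (⟪z (k + 1) - z k, s - z (k + 1)⟫ - ⟪u (k + 1) - v, u (k + 1) - u k⟫) := by
      rw [inner_sub_left (u (k + 1)) v]
      linear_combination h1 + h2
    have h4 := nonneg_of_mul_nonneg_right h3 hρ
    have ez : ‖z k - s‖ ^ 2 = ‖z (k + 1) - s‖ ^ 2 + ‖z (k + 1) - z k‖ ^ 2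
        + 2 * ⟪z (k + 1) - z k, s - z (k + 1)⟫ := by
      have : z k - s = -((z (k + 1) - z k) + (s - z (k + 1))) := by abel
      rw [this, norm_neg, norm_add_sq_real, norm_sub_rev s]
      ring
    have eu : ‖u k - v‖ ^ 2 = ‖u (k + 1) - v‖ ^ 2 + ‖u (k + 1) - u k‖ ^ 2
        - 2 * ⟪u (k + 1) - v, u (k + 1) - u k⟫ := by
      have : u k - v = (u (k + 1) - v) - (u (k + 1) - u k) := by abel
      rw [this, norm_sub_sq_real]
      ring
    simp only [hW]
    linarith
  have hanti : Antitone W := antitone_nat_of_succ_le fun k => by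
    have := hdec k
    nlinarith [sq_nonneg ‖z (k + 1) - z k‖, sq_nonneg ‖u (k + 1) - u k‖]
  have hW0 : ∀ k, 0 ≤ W k := fun k => by positivity
  obtain ⟨l, hl⟩ : ∃ l, Filter.Tendsto W Filter.atTop (nhds l) :=
    ⟨_, tendsto_atTop_ciInf hanti ⟨0, by rintro _ ⟨k, rfl⟩; exact hW0 k⟩⟩
  have hdiff : Filter.Tendsto (fun k => W k - W (k + 1)) Filter.atTop (nhds 0) := by
    have := hl.sub (hl.comp (Filter.tendsto_add_atTop_nat 1))
    rwa [sub_self] at this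
  have hsqrt : Filter.Tendsto (fun k => √(W k - W (k + 1))) Filter.atTop (nhds 0) := by
    have := (Real.continuous_sqrt.tendsto 0).comp hdiff
    rwa [Real.sqrt_zero] at this
  have hdz : ∀ k, ‖z (k + 1) - z k‖ ≤ √(W k - W (k + 1)) := fun k =>
    Real.le_sqrt_of_sq_le (by nlinarith [hdec k, sq_nonneg ‖u (k + 1) - u k‖])
  have hdu : ∀ k, ‖u (k + 1) - u k‖ ≤ √(W k - W (k + 1)) := fun k =>
    Real.le_sqrt_of_sq_le (by nlinarith [hdec k, sq_nonneg ‖z (k + 1) - z k‖])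
  have hbz : ∀ k, ‖s - z k‖ ≤ √(W 0) := fun k =>
    Real.le_sqrt_of_sq_le (by
      rw [norm_sub_rev]
      have := hanti (Nat.zero_le k)
      have h2 := sq_nonneg ‖u k - v‖
      simp only [hW] at this ⊢
      linarith)
  have hbu : ∀ k, ‖u k‖ ≤ √(W 0) + ‖v‖ := fun k => by
    have h1 : ‖u k - v‖ ≤ √(W 0) := Real.le_sqrt_of_sq_le (by
      have := hanti (Nat.zero_le k)
      have h2 := sq_nonneg ‖z k - s‖
      simp only [hW] at this ⊢
      linarith)
    have := norm_le_norm_add_norm_sub' (u k) v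
    linarith
  -- The upper and the lower bound on `F k - Fs` are, up to sign, at most a constant times
  -- `√(W k - W (k + 1))`.
  set C : ℝ := ρ * (√(W 0) + (√(W 0) + ‖v‖)) with hC
  refine tendsto_of_tendsto_of_tendsto_of_le_of_le
    (g := fun k => Fs - ‖y‖ * √(W k - W (k + 1)))
    (h := fun k => Fs + C * √(W k - W (k + 1))) ?_ ?_ ?_ ?_
  · simpa using (hsqrt.const_mul ‖y‖).const_sub Fs
  · simpa using (hsqrt.const_mul C).const_add Fs
  · intro k
    have h1 := hlow k
    have h2 := real_inner_le_norm y (u (k + 1) - u k)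
    have h3 := mul_le_mul_of_nonneg_left (hdu k) (norm_nonneg y)
    show Fs - ‖y‖ * √(W k - W (k + 1)) ≤ F k
    linarith
  · intro k
    have h1 := hup k
    have h2 : ⟪z (k + 1) - z k, s - z (k + 1)⟫ ≤ √(W k - W (k + 1)) * √(W 0) :=
      (real_inner_le_norm _ _).trans
        (mul_le_mul (hdz k) (hbz (k + 1)) (norm_nonneg _) (Real.sqrt_nonneg _))
    have h3 : -⟪u (k + 1), u (k + 1) - u k⟫ ≤ (√(W 0) + ‖v‖) * √(W k - W (k + 1)) :=
      (neg_le_abs _).trans ((abs_real_inner_le_norm _ _).trans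
        (mul_le_mul (hbu (k + 1)) (hdu k) (norm_nonneg _) (by positivity)))
    have h4 := mul_le_mul_of_nonneg_left (add_le_add h2 h3) hρ.le
    show F k ≤ Fs + C * √(W k - W (k + 1))
    rw [hC]
    linear_combination h1 + h4

lemma netAvg_const {𝒯 N : Type*} [Fintype 𝒯] [DecidableEq N] {T : ℕ}
    (net : 𝒯 → N) (p : 𝒯 → EuclideanSpace ℝ (Fin T)) (t t' : 𝒯) (h : net t = net t') :
    netAvg net p t = netAvg net p t' := by
  simp only [netAvg, h]

/-- Net averaging does not change the inner product with a schedule that is constant on nets. -/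
lemma sum_inner_netAvg {𝒯 N : Type*} [Fintype 𝒯] [DecidableEq N] {T : ℕ}
    (net : 𝒯 → N) (c b : 𝒯 → EuclideanSpace ℝ (Fin T))
    (hc : ∀ t t', net t = net t' → c t = c t') :
    ∑ t, ⟪c t, netAvg net b t⟫ = ∑ t, ⟪c t, b t⟫ := by
  simp only [netAvg, real_inner_smul_right, inner_sum, mul_sum]
  simp only [sum_filter]
  rw [sum_comm]
  refine sum_congr rfl fun t' _ => ?_
  have h1 : ∀ t : 𝒯, (if net t' = net t then
      ((univ.filter fun s => net s = net t).card : ℝ)⁻¹ * ⟪c t, b t'⟫ else 0)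
      = if net t = net t' then
        ((univ.filter fun s => net s = net t').card : ℝ)⁻¹ * ⟪c t', b t'⟫ else 0 := by
    intro t
    by_cases h : net t = net t'
    · rw [if_pos h, if_pos h.symm, hc t t' h, h]
    · rw [if_neg h, if_neg (Ne.symm h)]
  rw [sum_congr rfl fun t _ => h1 t, ← sum_filter, sum_const, nsmul_eq_mul, ← mul_assoc,
    mul_inv_cancel₀, one_mul]
  have : t' ∈ univ.filter fun s => net s = net t' := by simp
  exact_mod_cast (card_pos.2 ⟨t', this⟩).ne'

lemma ereal_coe_sum {ι : Type*} (s : Finset ι) (g : ι → ℝ) :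
    ((∑ i ∈ s, g i : ℝ) : EReal) = ∑ i ∈ s, (g i : EReal) :=
  map_sum (⟨⟨((↑) : ℝ → EReal), EReal.coe_zero⟩, EReal.coe_add⟩ : ℝ →+ EReal) g s

lemma ereal_sum_ne_bot {ι : Type*} (s : Finset ι) (g : ι → EReal) (h : ∀ i, g i ≠ ⊥) :
    ∑ i ∈ s, g i ≠ ⊥ := by
  classical
  induction s using Finset.induction_on with
  | empty => simp
  | insert a s ha ih =>
    rw [sum_insert ha]
    simp [EReal.add_eq_bot_iff, h, ih]

lemma ereal_ne_top_of_sum {ι : Type*} [Fintype ι] (g : ι → EReal) (h : ∀ i, g i ≠ ⊥)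
    (hs : ∑ i, g i ≠ ⊤) (i : ι) : g i ≠ ⊤ := by
  classical
  intro hi
  apply hs
  rw [← add_sum_erase _ _ (mem_univ i), hi]
  exact EReal.top_add_of_ne_bot (ereal_sum_ne_bot _ _ h)

/-- Prox-average message passing: if all device objectives are convex, lower
semicontinuous and proper, and a saddle point `(p⋆, y⋆)` exists, then the objective
values converge to the optimal value `f⋆` of the OPSP. -/
theorem stmt7 {𝒯 D N : Type*} [Fintype 𝒯] [Fintype D] [DecidableEq D] [DecidableEq N]
    (dev : 𝒯 → D) (net : 𝒯 → N) (hsurj : Function.Surjective net) (T : ℕ)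
    (f : ∀ d : D, ({t : 𝒯 // dev t = d} → EuclideanSpace ℝ (Fin T)) → EReal)
    (hbot : ∀ d x, f d x ≠ ⊥)
    (hconv : ∀ d, ∀ x y : {t : 𝒯 // dev t = d} → EuclideanSpace ℝ (Fin T), ∀ a b : ℝ,
      0 ≤ a → 0 ≤ b → a + b = 1 →
      f d (a • x + b • y) ≤ (a : EReal) * f d x + (b : EReal) * f d y)
    (hlsc : ∀ d, LowerSemicontinuous (f d))
    (hproper : ∀ d, ∃ x, f d x ≠ ⊤)
    (ρ : ℝ) (hρ : 0 < ρ)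
    (p u : ℕ → 𝒯 → EuclideanSpace ℝ (Fin T))
    (hu0 : ∀ t t', net t = net t' → u 0 t = u 0 t')
    -- proximal power schedule update:
    -- `p^{k+1}_d = prox_{f_d,ρ}(p^k_d − p̄^k_d − u^k_d)` for every device `d`
    (hprox : ∀ k d, ∀ y : {t : 𝒯 // dev t = d} → EuclideanSpace ℝ (Fin T),
      f d (fun t => p (k + 1) t.1) +
        (((ρ / 2) * ∑ t : {t : 𝒯 // dev t = d},
          ‖(p k t.1 - netAvg net (p k) t.1 - u k t.1) - p (k + 1) t.1‖ ^ 2 : ℝ) : EReal) ≤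
      f d y +
        (((ρ / 2) * ∑ t : {t : 𝒯 // dev t = d},
          ‖(p k t.1 - netAvg net (p k) t.1 - u k t.1) - y t‖ ^ 2 : ℝ) : EReal))
    -- scaled price update: `u^{k+1} = u^k + p̄^{k+1}`
    (hdual : ∀ k t, u (k + 1) t = u k t + netAvg net (p (k + 1)) t)
    -- a saddle point exists: an optimal primal `p⋆` with `p̄⋆ = 0` and finite `f(p⋆)`,
    -- together with `y⋆` constant on each net, such that `p⋆` minimizes the Lagrangian
    (pstar ystar : 𝒯 → EuclideanSpace ℝ (Fin T))
    (hfeas : ∀ t, netAvg net pstar t = 0)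
    (hfin : netObj dev f pstar ≠ ⊤)
    (hopt : ∀ q : 𝒯 → EuclideanSpace ℝ (Fin T),
      (∀ t, netAvg net q t = 0) → netObj dev f pstar ≤ netObj dev f q)
    (hyconst : ∀ t t', net t = net t' → ystar t = ystar t')
    (hsaddle : ∀ q : 𝒯 → EuclideanSpace ℝ (Fin T),
      netObj dev f pstar + ((∑ t, ⟪ystar t, netAvg net pstar t⟫ : ℝ) : EReal) ≤
        netObj dev f q + ((∑ t, ⟪ystar t, netAvg net q t⟫ : ℝ) : EReal)) :
    -- the objective values converge to the optimal value of the OPSP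
    Filter.Tendsto (fun k => netObj dev f (p k)) Filter.atTop
      (nhds (⨅ (q : 𝒯 → EuclideanSpace ℝ (Fin T)) (_ : ∀ t, netAvg net q t = 0),
        netObj dev f q)) := by
  classical
  have hfin' : ∀ d, f d (fun t => pstar t.1) ≠ ⊤ :=
    ereal_ne_top_of_sum _ (fun d => hbot d _) hfin
  set B : D → ℝ := fun d => (f d fun t => pstar t.1).toReal with hBdef
  have hB : ∀ d, f d (fun t => pstar t.1) = (B d : EReal) := fun d =>
    (EReal.coe_toReal (hfin' d) (hbot d _)).symm
  -- The proximal objective at `p⋆` is finite, hence so is `f` at every proximal point.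
  have hpfin : ∀ k d, f d (fun t => p (k + 1) t.1) ≠ ⊤ := by
    intro k d htop
    have h := hprox k d (fun t => pstar t.1)
    rw [htop, hB d, EReal.top_add_coe, ← EReal.coe_add] at h
    exact EReal.coe_ne_top _ (top_le_iff.1 h)
  set A : ℕ → D → ℝ := fun k d => (f d fun t => p (k + 1) t.1).toReal with hAdef
  have hA : ∀ k d, f d (fun t => p (k + 1) t.1) = (A k d : EReal) := fun k d =>
    (EReal.coe_toReal (hpfin k d) (hbot d _)).symm
  have hobjB : netObj dev f pstar = ((∑ d, B d : ℝ) : EReal) := by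
    rw [netObj, ereal_coe_sum]
    exact sum_congr rfl fun d _ => hB d
  have hobjA : ∀ k, netObj dev f (p (k + 1)) = ((∑ d, A k d : ℝ) : EReal) := fun k => by
    rw [netObj, ereal_coe_sum]
    exact sum_congr rfl fun d _ => hA k d
  have hval : (⨅ (q : 𝒯 → EuclideanSpace ℝ (Fin T)) (_ : ∀ t, netAvg net q t = 0),
      netObj dev f q) = ((∑ d, B d : ℝ) : EReal) := by
    rw [← hobjB]
    exact le_antisymm (iInf₂_le pstar hfeas) (le_iInf₂ hopt)
  rw [hval, ← Filter.tendsto_add_atTop_iff_nat 1]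
  simp only [hobjA]
  refine (continuous_coe_real_ereal.tendsto _).comp ?_
  have huconst : ∀ k t t', net t = net t' → u k t = u k t' := by
    intro k
    induction k with
    | zero => exact hu0
    | succ k ih =>
      intro t t' h
      rw [hdual, hdual, ih t t' h, netAvg_const net _ t t' h]
  set z : ℕ → 𝒯 → EuclideanSpace ℝ (Fin T) := fun k t => p k t - netAvg net (p k) t with hz
  have horth : ∀ c : 𝒯 → EuclideanSpace ℝ (Fin T), (∀ t t', net t = net t' → c t = c t') →
      ∀ k, ∑ t, ⟪c t, z k t⟫ = 0 := by
    intro c hc k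
    simp only [hz, inner_sub_right, sum_sub_distrib]
    rw [sum_inner_netAvg net c (p k) hc, sub_self]
  have horths : ∀ c : 𝒯 → EuclideanSpace ℝ (Fin T), (∀ t t', net t = net t' → c t = c t') →
      ∑ t, ⟪c t, pstar t⟫ = 0 := by
    intro c hc
    rw [← sum_inner_netAvg net c pstar hc]
    simp [hfeas]
  have hdiff : ∀ k t, u (k + 1) t - u k t = netAvg net (p (k + 1)) t := fun k t => by
    rw [hdual, add_sub_cancel_left]
  have hinner : ∀ a b : 𝒯 → EuclideanSpace ℝ (Fin T),
      ⟪(WithLp.toLp 2 a : PiLp 2 fun _ : 𝒯 => EuclideanSpace ℝ (Fin T)), WithLp.toLp 2 b⟫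
        = ∑ t, ⟪a t, b t⟫ := fun a b => PiLp.inner_apply _ _
  refine tendsto_of_two_sided_bound
    (E := PiLp 2 (fun _ : 𝒯 => EuclideanSpace ℝ (Fin T)))
    (fun k => WithLp.toLp 2 (z k)) (fun k => WithLp.toLp 2 (u k)) (WithLp.toLp 2 pstar)
    (WithLp.toLp 2 ystar) ρ hρ _ _ ?_ ?_
  · intro k
    simp only [← WithLp.toLp_sub, hinner, Pi.sub_apply, hdiff]
    have h1 : ∀ d, A k d - B d ≤ ρ * ∑ t : {t : 𝒯 // dev t = d},
        ⟪p (k + 1) t.1 - (z k t.1 - u k t.1), pstar t.1 - p (k + 1) t.1⟫ := fun d =>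
      prox_opt (f d) (hconv d) ρ (fun t => z k t.1 - u k t.1) (fun t => p (k + 1) t.1)
        (fun t => pstar t.1) (A k d) (B d) (hA k d) (hB d) (hprox k d)
    have h2 := sum_le_sum fun d (_ : d ∈ univ) => h1 d
    rw [sum_sub_distrib, ← mul_sum, Fintype.sum_fiberwise dev
      (fun t => ⟪p (k + 1) t - (z k t - u k t), pstar t - p (k + 1) t⟫)] at h2
    refine h2.trans (le_of_eq ?_)
    congr 1
    have e : ∀ t, ⟪p (k + 1) t - (z k t - u k t), pstar t - p (k + 1) t⟫
        = ⟪z (k + 1) t - z k t, pstar t - z (k + 1) t⟫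
          - ⟪u (k + 1) t, netAvg net (p (k + 1)) t⟫
          + (⟪u (k + 1) t, pstar t⟫ - ⟪u (k + 1) t, z (k + 1) t⟫)
          - (⟪netAvg net (p (k + 1)) t, z (k + 1) t⟫ - ⟪netAvg net (p (k + 1)) t, z k t⟫) := by
      intro t
      have e1 : p (k + 1) t - (z k t - u k t) = (z (k + 1) t - z k t) + u (k + 1) t := by
        simp only [hz, hdual]
        abel
      have e2 : pstar t - p (k + 1) t
          = (pstar t - z (k + 1) t) - netAvg net (p (k + 1)) t := by
        simp only [hz]
        abel
      rw [e1, e2, inner_add_left, inner_sub_right, inner_sub_right (u (k + 1) t),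
        inner_sub_right (u (k + 1) t), ← inner_sub_right (netAvg net (p (k + 1)) t),
        real_inner_comm (z (k + 1) t - z k t) (netAvg net (p (k + 1)) t)]
      ring
    have hn := netAvg_const net (p (k + 1))
    rw [sum_congr rfl fun t _ => e t]
    simp only [sum_sub_distrib, sum_add_distrib]
    rw [horths _ (huconst (k + 1)), horth _ (huconst (k + 1)), horth _ hn, horth _ hn]
    ring
  · intro k
    simp only [← WithLp.toLp_sub, hinner, Pi.sub_apply, hdiff]
    have h := hsaddle (p (k + 1))
    rw [hobjA, hobjB] at h
    norm_cast at h
    simp only [hfeas, inner_zero_right, sum_const_zero, add_zero] at h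
    linarith
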